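/- Let y be a quasi shell solution satisfying in addition 2m(r)/r ≤ 8/9 for all r > 0. There exists ε > 0, depending only on k, ℓ and L₀, such that if the inner radius satisfies R₀ ≤ ε, then every radius r₂ with the properties of Lemma 4.4 (namely R₀ + σ_* < r₂ ≤ R₀ + σ_* + κR₀^{(q+2)/(q+1)}, γ(r₂) = γ_*, and γ(r) ≥ γ_* on [R₀ + σ_*, r₂]) satisfies m(r₂)/r₂ ≥ 2/5. -/

import Mathlib

open MeasureTheory Real Set Filter

/-- The constant `c_ℓ = 2π ∫₀¹ s^ℓ (1-s)^{-1/2} ds`. -/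
noncomputable def cConst (ℓ : ℝ) : ℝ :=
  2 * π * ∫ s in Set.Ioc (0 : ℝ) 1, s ^ ℓ / Real.sqrt (1 - s)

/-- Energy density of the massless Einstein--Vlasov ansatz. -/
noncomputable def rho (k ℓ L0 : ℝ) (y : ℝ → ℝ) (r : ℝ) : ℝ :=
  cConst ℓ * r ^ (2 * ℓ) *
    ∫ ε in Set.Ioc (Real.sqrt L0 / r) (Real.exp (y r)),
      (1 - ε * Real.exp (-(y r))) ^ k * ε ^ 2 * (ε ^ 2 - L0 / r ^ 2) ^ (ℓ + 1 / 2)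

/-- Radial pressure of the massless Einstein--Vlasov ansatz. -/
noncomputable def pres (k ℓ L0 : ℝ) (y : ℝ → ℝ) (r : ℝ) : ℝ :=
  (cConst ℓ / (2 * ℓ + 3)) * r ^ (2 * ℓ) *
    ∫ ε in Set.Ioc (Real.sqrt L0 / r) (Real.exp (y r)),
      (1 - ε * Real.exp (-(y r))) ^ k * (ε ^ 2 - L0 / r ^ 2) ^ (ℓ + 3 / 2)

/-- The Hawking mass `m(r) = 4π ∫₀ʳ s² ϱ(s) ds`. -/
noncomputable def hawkingMass (k ℓ L0 : ℝ) (y : ℝ → ℝ) (r : ℝ) : ℝ :=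
  4 * π * ∫ s in Set.Ioc (0 : ℝ) r, s ^ 2 * rho k ℓ L0 y s

/-- The characteristic function `γ(r) = y(r) - (1/2) ln (L₀ / r²)`. -/
noncomputable def charFn (L0 : ℝ) (y : ℝ → ℝ) (r : ℝ) : ℝ :=
  y r - (1 / 2) * Real.log (L0 / r ^ 2)

/-- The inner radius `R₀ = √L₀ e^{-y(0)}`. -/
noncomputable def innerRadius (L0 : ℝ) (y : ℝ → ℝ) : ℝ :=
  Real.sqrt L0 * Real.exp (-(y 0))

/-- A quasi shell solution of the massless Einstein--Vlasov system. -/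
def QuasiShell (k ℓ L0 : ℝ) (y : ℝ → ℝ) : Prop :=
  ContDiffOn ℝ 1 y (Set.Ici 0) ∧
  ∀ r > 0, 2 * hawkingMass k ℓ L0 y r / r < 1 ∧
    HasDerivAt y
      (-(1 - 2 * hawkingMass k ℓ L0 y r / r)⁻¹ *
        (4 * π * r * pres k ℓ L0 y r + hawkingMass k ℓ L0 y r / r ^ 2)) r

/-- `q = k + ℓ + 3/2`. -/
noncomputable def qExp (k ℓ : ℝ) : ℝ := k + ℓ + 3 / 2

/-- `C_m = max{1, C_u, 4πC_u}`. -/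
noncomputable def Cmax (Cu : ℝ) : ℝ := max 1 (max Cu (4 * π * Cu))

/-- `C₀ = min{1/4, (C_m 8^{1/(q+1)})⁻¹}`. -/
noncomputable def C0c (k ℓ Cu : ℝ) : ℝ :=
  min (1 / 4) (Cmax Cu * 8 ^ (1 / (qExp k ℓ + 1)))⁻¹

/-- `σ_* = C₀ R₀^{1 + (2q+1)/(q(q+1))}`. -/
noncomputable def sigmaStar (k ℓ Cu R0 : ℝ) : ℝ :=
  C0c k ℓ Cu * R0 ^ (1 + (2 * qExp k ℓ + 1) / (qExp k ℓ * (qExp k ℓ + 1)))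

/-- `γ_* = σ_* / (2(R₀ + σ_*))`. -/
noncomputable def gammaStar (k ℓ Cu R0 : ℝ) : ℝ :=
  sigmaStar k ℓ Cu R0 / (2 * (R0 + sigmaStar k ℓ Cu R0))

/-- `κ = 9·2^{2q} / (C_l C₀^q)`. -/
noncomputable def kappaC (k ℓ Cl Cu : ℝ) : ℝ :=
  9 * 2 ^ (2 * qExp k ℓ) / (Cl * C0c k ℓ Cu ^ qExp k ℓ)

/-- Rescaled pressure integrand. -/
noncomputable def pI (k ℓ x u : ℝ) : ℝ :=
  if 1 < exp x * u ∧ u ≤ 1 then (1 - u) ^ k * (exp (2 * x) * u ^ 2 - 1) ^ (ℓ + 3 / 2) else 0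

/-- Rescaled density integrand. -/
noncomputable def qI (k ℓ x u : ℝ) : ℝ :=
  if 1 < exp x * u ∧ u ≤ 1 then
    (1 - u) ^ k * u ^ 2 * (exp (2 * x) * u ^ 2 - 1) ^ (ℓ + 1 / 2) else 0

lemma exp_two_sq (x u : ℝ) : exp (2 * x) * u ^ 2 = (exp x * u) ^ 2 := by
  rw [mul_pow, ← Real.exp_nat_mul]; norm_num

lemma exp_charFn (L0 : ℝ) (y : ℝ → ℝ) (r : ℝ) (hL : 0 < L0) (hr : 0 < r) :
    exp (y r) = exp (charFn L0 y r) * (sqrt L0 / r) := by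
  have hb : 0 < sqrt L0 := sqrt_pos.mpr hL
  unfold charFn
  have : (1 / 2) * Real.log (L0 / r ^ 2) = Real.log (sqrt L0 / r) := by
    rw [Real.log_div hL.ne' (by positivity), Real.log_div hb.ne' hr.ne', Real.log_sqrt hL.le,
      Real.log_pow]
    push_cast; ring
  rw [this, Real.exp_sub, Real.exp_log (by positivity)]
  field_simp

lemma integral_rescale (f g : ℝ → ℝ) (a c b d : ℝ) (ha : 0 < a)
    (h : ∀ u, (Ioc b d).indicator f (a * u) = c * g u) :
    ∫ ε in Ioc b d, f ε = a * (c * ∫ u, g u) := by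
  rw [← integral_indicator measurableSet_Ioc]
  have h1 := Measure.integral_comp_mul_left ((Ioc b d).indicator f) a
  simp only [h] at h1
  rw [integral_const_mul] at h1
  rw [h1, abs_of_pos (by positivity), smul_eq_mul]
  field_simp

lemma mem_rescale (L0 : ℝ) (y : ℝ → ℝ) (r u : ℝ) (hL : 0 < L0) (hr : 0 < r) :
    exp (y r) * u ∈ Ioc (sqrt L0 / r) (exp (y r)) ↔
      (1 < exp (charFn L0 y r) * u ∧ u ≤ 1) := by
  have hb : 0 < sqrt L0 := sqrt_pos.mpr hL
  have hbr : 0 < sqrt L0 / r := by positivity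
  have he := exp_charFn L0 y r hL hr
  rw [mem_Ioc]
  constructor
  · rintro ⟨h1, h2⟩
    refine ⟨?_, ?_⟩
    · rw [he] at h1
      by_contra hc
      push Not at hc
      nlinarith
    · by_contra hc
      push Not at hc
      nlinarith [exp_pos (y r)]
  · rintro ⟨h1, h2⟩
    refine ⟨?_, ?_⟩
    · rw [he]
      nlinarith
    · nlinarith [exp_pos (y r)]

lemma diff_rescale (L0 : ℝ) (y : ℝ → ℝ) (r u : ℝ) (hL : 0 < L0) (hr : 0 < r) :
    (exp (y r) * u) ^ 2 - L0 / r ^ 2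
      = (sqrt L0 / r) ^ 2 * (exp (2 * charFn L0 y r) * u ^ 2 - 1) := by
  have he := exp_charFn L0 y r hL hr
  rw [exp_two_sq, he, div_pow, sq_sqrt hL.le]
  have := sq_sqrt hL.le
  field_simp
  rw [this]; ring

lemma pres_eq (k ℓ L0 : ℝ) (y : ℝ → ℝ) (r : ℝ) (hL : 0 < L0) (hr : 0 < r) :
    pres k ℓ L0 y r = cConst ℓ / (2 * ℓ + 3) * L0 ^ (ℓ + 2) * (r ^ 4)⁻¹ *
      (exp (charFn L0 y r) * ∫ u, pI k ℓ (charFn L0 y r) u) := by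
  have hb : 0 < sqrt L0 := sqrt_pos.mpr hL
  unfold pres
  rw [integral_rescale _ (pI k ℓ (charFn L0 y r)) (exp (y r))
    (((sqrt L0 / r) ^ 2) ^ (ℓ + 3 / 2)) _ _ (exp_pos _)]
  · have e1 : ((sqrt L0 / r) ^ 2) ^ (ℓ + 3 / 2) = sqrt L0 ^ (2 * ℓ + 3) / (r ^ (2 * ℓ) * r ^ 3) := by
      rw [← rpow_natCast, ← rpow_mul (by positivity), div_rpow hb.le hr.le,
        ← rpow_natCast r 3, ← rpow_add hr]
      push_cast
      ring_nf
    have e2 : L0 ^ (ℓ + 2) = sqrt L0 ^ (2 * ℓ + 3) * sqrt L0 := by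
      nth_rewrite 1 [← sq_sqrt hL.le]
      rw [← rpow_natCast, ← rpow_mul hb.le]
      nth_rewrite 3 [← rpow_one (sqrt L0)]
      rw [← rpow_add hb]
      push_cast
      ring_nf
    rw [e1, e2, exp_charFn L0 y r hL hr]
    have := rpow_pos_of_pos hr (2 * ℓ)
    field_simp
  · intro u
    by_cases h : exp (y r) * u ∈ Ioc (sqrt L0 / r) (exp (y r))
    · rw [indicator_of_mem h]
      have h' := (mem_rescale L0 y r u hL hr).1 h
      unfold pI
      rw [if_pos h', diff_rescale L0 y r u hL hr, mul_rpow (by positivity)]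
      · have : exp (y r) * u * exp (-(y r)) = u := by
          rw [Real.exp_neg]; field_simp
        rw [this]; ring
      · rw [exp_two_sq]; nlinarith [h'.1]
    · rw [indicator_of_notMem h]
      unfold pI
      rw [if_neg (fun h' => h ((mem_rescale L0 y r u hL hr).2 h'))]
      simp

lemma rho_eq (k ℓ L0 : ℝ) (y : ℝ → ℝ) (r : ℝ) (hL : 0 < L0) (hr : 0 < r) :
    rho k ℓ L0 y r = cConst ℓ * L0 ^ (ℓ + 2) * (r ^ 4)⁻¹ *
      (exp (charFn L0 y r) ^ 3 * ∫ u, qI k ℓ (charFn L0 y r) u) := by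
  have hb : 0 < sqrt L0 := sqrt_pos.mpr hL
  unfold rho
  rw [integral_rescale _ (qI k ℓ (charFn L0 y r)) (exp (y r))
    (exp (y r) ^ 2 * ((sqrt L0 / r) ^ 2) ^ (ℓ + 1 / 2)) _ _ (exp_pos _)]
  · have e1 : ((sqrt L0 / r) ^ 2) ^ (ℓ + 1 / 2) = sqrt L0 ^ (2 * ℓ + 1) / (r ^ (2 * ℓ) * r) := by
      rw [← rpow_natCast, ← rpow_mul (by positivity), div_rpow hb.le hr.le]
      nth_rewrite 3 [← rpow_one r]
      rw [← rpow_add hr]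
      push_cast
      ring_nf
    have e2 : L0 ^ (ℓ + 2) = sqrt L0 ^ (2 * ℓ + 1) * sqrt L0 ^ 3 := by
      nth_rewrite 1 [← sq_sqrt hL.le]
      rw [← rpow_natCast, ← rpow_mul hb.le, ← rpow_natCast (sqrt L0) 3, ← rpow_add hb]
      push_cast
      ring_nf
    rw [e1, e2, exp_charFn L0 y r hL hr]
    have := rpow_pos_of_pos hr (2 * ℓ)
    field_simp
  · intro u
    by_cases h : exp (y r) * u ∈ Ioc (sqrt L0 / r) (exp (y r))
    · rw [indicator_of_mem h]
      have h' := (mem_rescale L0 y r u hL hr).1 h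
      unfold qI
      rw [if_pos h', diff_rescale L0 y r u hL hr, mul_rpow (by positivity)]
      · have : exp (y r) * u * exp (-(y r)) = u := by
          rw [Real.exp_neg]; field_simp
        rw [this]; ring
      · rw [exp_two_sq]; nlinarith [h'.1]
    · rw [indicator_of_notMem h]
      unfold qI
      rw [if_neg (fun h' => h ((mem_rescale L0 y r u hL hr).2 h'))]
      simp

lemma cConst_nonneg (ℓ : ℝ) : 0 ≤ cConst ℓ := by
  unfold cConst
  have : 0 ≤ ∫ s in Ioc (0 : ℝ) 1, s ^ ℓ / Real.sqrt (1 - s) :=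
    setIntegral_nonneg measurableSet_Ioc
      (fun s hs => div_nonneg (rpow_nonneg hs.1.le _) (sqrt_nonneg _))
  positivity

lemma pI_nonneg (k ℓ x u : ℝ) : 0 ≤ pI k ℓ x u := by
  unfold pI
  split_ifs with h
  · have : 0 ≤ exp (2 * x) * u ^ 2 - 1 := by rw [exp_two_sq]; nlinarith [h.1]
    exact mul_nonneg (rpow_nonneg (by linarith [h.2]) _) (rpow_nonneg this _)
  · exact le_rfl

lemma qI_nonneg (k ℓ x u : ℝ) : 0 ≤ qI k ℓ x u := by
  unfold qI
  split_ifs with h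
  · have : 0 ≤ exp (2 * x) * u ^ 2 - 1 := by rw [exp_two_sq]; nlinarith [h.1]
    exact mul_nonneg (mul_nonneg (rpow_nonneg (by linarith [h.2]) _) (sq_nonneg _))
      (rpow_nonneg this _)
  · exact le_rfl

lemma cond_false_of_nonpos {x u : ℝ} (hx : x ≤ 0) : ¬ (1 < exp x * u ∧ u ≤ 1) := by
  rintro ⟨h1, h2⟩
  have := Real.exp_le_one_iff.mpr hx
  nlinarith [exp_pos x]

lemma pI_zero (k ℓ x u : ℝ) (hx : x ≤ 0) : pI k ℓ x u = 0 := if_neg (cond_false_of_nonpos hx)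

lemma qI_zero (k ℓ x u : ℝ) (hx : x ≤ 0) : qI k ℓ x u = 0 := if_neg (cond_false_of_nonpos hx)

lemma pI_meas (k ℓ x : ℝ) : Measurable (pI k ℓ x) := by
  unfold pI
  refine Measurable.ite ?_ (by fun_prop) (by fun_prop)
  exact (measurableSet_lt measurable_const (measurable_const.mul measurable_id)).inter
    (measurableSet_le measurable_id measurable_const)

lemma qI_meas (k ℓ x : ℝ) : Measurable (qI k ℓ x) := by
  unfold qI
  refine Measurable.ite ?_ (by fun_prop) (by fun_prop)
  exact (measurableSet_lt measurable_const (measurable_const.mul measurable_id)).inter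
    (measurableSet_le measurable_id measurable_const)

lemma bound_integrable (C : ℝ) : Integrable ((Ioc (0:ℝ) 1).indicator (fun _ => C)) := by
  rw [integrable_indicator_iff measurableSet_Ioc]
  exact integrableOn_const (by simp)

lemma u_pos {x u : ℝ} (h : 1 < exp x * u) : 0 < u := by
  by_contra hc
  push Not at hc
  nlinarith [exp_pos x]

lemma qI_bound (k ℓ x X u : ℝ) (hk : 0 ≤ k) (hl : -(1 / 2) ≤ ℓ) (hx : x ≤ X) :
    ‖qI k ℓ x u‖ ≤ (Ioc (0:ℝ) 1).indicator (fun _ => exp (2 * X) ^ (ℓ + 1 / 2)) u := by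
  rw [Real.norm_of_nonneg (qI_nonneg _ _ _ _)]
  unfold qI
  split_ifs with h
  · have hu := u_pos h.1
    rw [indicator_of_mem (show u ∈ Ioc (0:ℝ) 1 from ⟨hu, h.2⟩)]
    have h0 : 0 ≤ exp (2 * x) * u ^ 2 - 1 := by rw [exp_two_sq]; nlinarith [h.1]
    have h1 : (1 - u) ^ k ≤ 1 := rpow_le_one (by linarith [h.2]) (by linarith) hk
    have h2 : u ^ 2 ≤ 1 := pow_le_one₀ hu.le h.2
    have h3 : (exp (2 * x) * u ^ 2 - 1) ^ (ℓ + 1 / 2) ≤ exp (2 * X) ^ (ℓ + 1 / 2) := by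
      apply rpow_le_rpow h0 _ (by linarith)
      have : exp (2 * x) ≤ exp (2 * X) := exp_le_exp.mpr (by linarith)
      nlinarith [exp_pos (2 * x)]
    have h4 : (1 - u) ^ k * u ^ 2 ≤ 1 :=
      mul_le_one₀ h1 (sq_nonneg _) h2
    calc _ ≤ 1 * exp (2 * X) ^ (ℓ + 1 / 2) :=
          mul_le_mul h4 h3 (rpow_nonneg h0 _) zero_le_one
      _ = _ := one_mul _
  · exact indicator_nonneg (fun _ _ => by positivity) _

lemma pI_bound (k ℓ x u : ℝ) (hk : 0 ≤ k) (hl : -(1 / 2) ≤ ℓ) :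
    ‖pI k ℓ x u‖ ≤ (Ioc (0:ℝ) 1).indicator (fun _ => exp (2 * x) ^ (ℓ + 3 / 2)) u := by
  rw [Real.norm_of_nonneg (pI_nonneg _ _ _ _)]
  unfold pI
  split_ifs with h
  · have hu := u_pos h.1
    rw [indicator_of_mem (show u ∈ Ioc (0:ℝ) 1 from ⟨hu, h.2⟩)]
    have h0 : 0 ≤ exp (2 * x) * u ^ 2 - 1 := by rw [exp_two_sq]; nlinarith [h.1]
    have h1 : (1 - u) ^ k ≤ 1 := rpow_le_one (by linarith [h.2]) (by linarith) hk
    have h2 : u ^ 2 ≤ 1 := pow_le_one₀ hu.le h.2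
    have h3 : (exp (2 * x) * u ^ 2 - 1) ^ (ℓ + 3 / 2) ≤ exp (2 * x) ^ (ℓ + 3 / 2) := by
      apply rpow_le_rpow h0 _ (by linarith)
      nlinarith [exp_pos (2 * x)]
    calc _ ≤ 1 * exp (2 * x) ^ (ℓ + 3 / 2) :=
          mul_le_mul h1 h3 (rpow_nonneg h0 _) zero_le_one
      _ = _ := one_mul _
  · exact indicator_nonneg (fun _ _ => by positivity) _

/-- Case analysis at a generic `u`. -/
lemma cond_eventually (x₀ u : ℝ) (hu : exp x₀ * u ≠ 1) :
    (∀ᶠ x in nhds x₀, (1 < exp x * u ∧ u ≤ 1)) ∧ (1 < exp x₀ * u ∧ u ≤ 1) ∨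
      (∀ᶠ x in nhds x₀, ¬ (1 < exp x * u ∧ u ≤ 1)) ∧ ¬ (1 < exp x₀ * u ∧ u ≤ 1) := by
  have hc : ContinuousAt (fun x => exp x * u) x₀ := by fun_prop
  by_cases h1 : u ≤ 1
  · rcases lt_or_gt_of_ne hu with h | h
    · right
      refine ⟨?_, fun h' => by linarith [h'.1]⟩
      filter_upwards [hc.eventually (gt_mem_nhds h)] with x hx h'
      linarith [h'.1]
    · left
      refine ⟨?_, h, h1⟩
      filter_upwards [hc.eventually (lt_mem_nhds h)] with x hx
      exact ⟨hx, h1⟩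
  · right
    exact ⟨Eventually.of_forall fun x h => h1 h.2, fun h => h1 h.2⟩

lemma ae_generic (x₀ : ℝ) : ∀ᵐ u : ℝ, exp x₀ * u ≠ 1 := by
  have : ∀ᵐ u : ℝ, u ≠ exp (-x₀) := by
    simp [ae_iff]
  filter_upwards [this] with u hu h
  apply hu
  rw [Real.exp_neg]
  field_simp
  linarith

lemma Q_continuous (k ℓ : ℝ) (hk : 0 ≤ k) (hl : -(1 / 2) ≤ ℓ) :
    Continuous (fun x => ∫ u, qI k ℓ x u) := by
  rw [continuous_iff_continuousAt]
  intro x₀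
  refine continuousAt_of_dominated
    (bound := (Ioc (0:ℝ) 1).indicator (fun _ => exp (2 * (x₀ + 1)) ^ (ℓ + 1 / 2))) ?_ ?_
    (bound_integrable _) ?_
  · exact Eventually.of_forall fun x => (qI_meas k ℓ x).aestronglyMeasurable
  · filter_upwards [gt_mem_nhds (show x₀ < x₀ + 1 by linarith)] with x hx
    exact Eventually.of_forall fun u => qI_bound k ℓ x (x₀ + 1) u hk hl hx.le
  · filter_upwards [ae_generic x₀] with u hu
    rcases cond_eventually x₀ u hu with ⟨h1, h2⟩ | ⟨h1, h2⟩
    · have : (fun x => (1 - u) ^ k * u ^ 2 * (exp (2 * x) * u ^ 2 - 1) ^ (ℓ + 1 / 2))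
          =ᶠ[nhds x₀] fun x => qI k ℓ x u := by
        filter_upwards [h1] with x hx
        unfold qI
        rw [if_pos hx]
      refine ContinuousAt.congr ?_ this
      refine ContinuousAt.mul continuousAt_const (ContinuousAt.rpow_const (by fun_prop) ?_)
      right; linarith
    · have : (fun x => 0) =ᶠ[nhds x₀] fun x => qI k ℓ x u := by
        filter_upwards [h1] with x hx
        unfold qI
        rw [if_neg hx]
      exact ContinuousAt.congr continuousAt_const this

lemma pI_alt (k ℓ x u : ℝ) (hl : -(1 / 2) ≤ ℓ) (hu0 : 0 < u) (hu : u ≤ 1) :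
    pI k ℓ x u = (1 - u) ^ k * (max (exp (2 * x) * u ^ 2 - 1) 0) ^ (ℓ + 3 / 2) := by
  unfold pI
  have hp : 0 < exp x * u := by positivity
  split_ifs with h
  · rw [max_eq_left]
    rw [exp_two_sq]; nlinarith [h.1]
  · have : ¬ 1 < exp x * u := fun h' => h ⟨h', hu⟩
    rw [max_eq_right, zero_rpow (by linarith), mul_zero]
    rw [exp_two_sq]; nlinarith

lemma rpow_lip (a T s t : ℝ) (ha : 1 ≤ a) (hs : s ∈ Icc 0 T) (ht : t ∈ Icc 0 T) :
    |t ^ a - s ^ a| ≤ a * T ^ (a - 1) * |t - s| := by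
  have := Convex.norm_image_sub_le_of_norm_hasDerivWithin_le (f := fun x : ℝ => x ^ a)
    (f' := fun x => a * x ^ (a - 1)) (C := a * T ^ (a - 1)) (s := Icc 0 T)
    (fun x _ => (Real.hasDerivAt_rpow_const (Or.inr ha)).hasDerivWithinAt) ?_
    (convex_Icc 0 T) hs ht
  · simpa using this
  · intro x hx
    rw [Real.norm_of_nonneg (mul_nonneg (by linarith) (rpow_nonneg hx.1 _))]
    exact mul_le_mul_of_nonneg_left (rpow_le_rpow hx.1 hx.2 (by linarith)) (by linarith)

lemma exp_lip (X s t : ℝ) (hs : s ≤ X) (ht : t ≤ X) :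
    |exp (2 * t) - exp (2 * s)| ≤ 2 * exp (2 * X) * |t - s| := by
  have := Convex.norm_image_sub_le_of_norm_hasDerivWithin_le (f := fun x : ℝ => exp (2 * x))
    (f' := fun x => exp (2 * x) * (2 * 1)) (C := 2 * exp (2 * X)) (s := Iic X)
    (fun x _ => (((hasDerivAt_id x).const_mul 2).exp).hasDerivWithinAt) ?_
    (convex_Iic X) hs ht
  · simpa using this
  · intro x hx
    rw [Real.norm_of_nonneg (by positivity)]
    have : exp (2 * x) ≤ exp (2 * X) := exp_le_exp.mpr (by linarith [mem_Iic.1 hx])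
    linarith

lemma P_hasDerivAt (k ℓ : ℝ) (hk : 0 ≤ k) (hl : -(1 / 2) ≤ ℓ) (x₀ : ℝ) :
    HasDerivAt (fun x => ∫ u, pI k ℓ x u)
      ((2 * ℓ + 3) * exp (2 * x₀) * ∫ u, qI k ℓ x₀ u) x₀ := by
  set C : ℝ := (ℓ + 3 / 2) * exp (2 * (x₀ + 1)) ^ (ℓ + 3 / 2 - 1) * (2 * exp (2 * (x₀ + 1))) with hC
  have hC0 : 0 ≤ C := by
    have : 0 ≤ ℓ + 3 / 2 := by linarith
    positivity
  have key := hasDerivAt_integral_of_dominated_loc_of_lip (μ := volume)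
    (F := fun x u => pI k ℓ x u)
    (F' := fun u => (2 * ℓ + 3) * exp (2 * x₀) * qI k ℓ x₀ u) (x₀ := x₀)
    (bound := (Ioc (0:ℝ) 1).indicator (fun _ => C)) (s := Metric.ball x₀ 1)
    (Metric.ball_mem_nhds x₀ one_pos)
    (Eventually.of_forall fun x => (pI_meas k ℓ x).aestronglyMeasurable)
    ((bound_integrable _).mono' (pI_meas k ℓ x₀).aestronglyMeasurable
      (Eventually.of_forall fun u => pI_bound k ℓ x₀ u hk hl))
    ((qI_meas k ℓ x₀).const_mul _).aestronglyMeasurable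
    ?_ (bound_integrable _) ?_
  · have := key.2
    rwa [integral_const_mul] at this
  · refine Eventually.of_forall fun u => ?_
    rw [lipschitzOnWith_iff_norm_sub_le]
    intro x hx z hz
    by_cases hu : u ∈ Ioc (0:ℝ) 1
    · rw [indicator_of_mem hu]
      simp only [Real.coe_nnabs, abs_of_nonneg hC0, Real.norm_eq_abs]
      rw [pI_alt k ℓ x u hl hu.1 hu.2, pI_alt k ℓ z u hl hu.1 hu.2, ← mul_sub, abs_mul]
      have hx' : x ≤ x₀ + 1 := by
        have := abs_lt.1 (by simpa [Real.dist_eq] using hx : |x - x₀| < 1); linarith [this.2]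
      have hz' : z ≤ x₀ + 1 := by
        have := abs_lt.1 (by simpa [Real.dist_eq] using hz : |z - x₀| < 1); linarith [this.2]
      have h1 : |(1 - u) ^ k| ≤ 1 := by
        rw [abs_of_nonneg (rpow_nonneg (by linarith [hu.2]) _)]
        exact rpow_le_one (by linarith [hu.2]) (by linarith [hu.1]) hk
      have h2 : u ^ 2 ≤ 1 := pow_le_one₀ hu.1.le hu.2
      have hmem : ∀ w ≤ x₀ + 1, max (exp (2 * w) * u ^ 2 - 1) 0 ∈ Icc 0 (exp (2 * (x₀ + 1))) := by
        intro w hw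
        refine ⟨le_max_right _ _, max_le ?_ (exp_pos _).le⟩
        have : exp (2 * w) ≤ exp (2 * (x₀ + 1)) := exp_le_exp.mpr (by linarith)
        nlinarith [exp_pos (2 * w)]
      have h3 := rpow_lip (ℓ + 3 / 2) _ _ _ (by linarith) (hmem z hz') (hmem x hx')
      have h4 : |max (exp (2 * x) * u ^ 2 - 1) 0 - max (exp (2 * z) * u ^ 2 - 1) 0|
          ≤ 2 * exp (2 * (x₀ + 1)) * |x - z| := by
        refine (abs_max_sub_max_le_abs _ _ _).trans ?_
        have : exp (2 * x) * u ^ 2 - 1 - (exp (2 * z) * u ^ 2 - 1)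
          = (exp (2 * x) - exp (2 * z)) * u ^ 2 := by ring
        rw [this, abs_mul, abs_of_nonneg (sq_nonneg u)]
        have := exp_lip (x₀ + 1) z x hz' hx'
        nlinarith [abs_nonneg (exp (2 * x) - exp (2 * z)), sq_nonneg u]
      have h5 : 0 ≤ (ℓ + 3 / 2) * exp (2 * (x₀ + 1)) ^ (ℓ + 3 / 2 - 1) := by
        have : 0 ≤ ℓ + 3 / 2 := by linarith
        positivity
      calc _ ≤ 1 * ((ℓ + 3 / 2) * exp (2 * (x₀ + 1)) ^ (ℓ + 3 / 2 - 1) *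
              (2 * exp (2 * (x₀ + 1)) * |x - z|)) := by
            refine mul_le_mul h1 (h3.trans ?_) (abs_nonneg _) zero_le_one
            exact mul_le_mul_of_nonneg_left h4 h5
        _ = _ := by rw [hC]; ring
    · have hz0 : ∀ w, pI k ℓ w u = 0 := fun w => if_neg fun h => hu ⟨u_pos h.1, h.2⟩
      simp [hz0, indicator_of_notMem hu]
  · filter_upwards [ae_generic x₀] with u hu
    rcases cond_eventually x₀ u hu with ⟨h1, h2⟩ | ⟨h1, h2⟩
    · have : (fun x => pI k ℓ x u) =ᶠ[nhds x₀]
          fun x => (1 - u) ^ k * (exp (2 * x) * u ^ 2 - 1) ^ (ℓ + 3 / 2) := by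
        filter_upwards [h1] with x hx
        unfold pI
        rw [if_pos hx]
      refine HasDerivAt.congr_of_eventuallyEq ?_ this
      have hd : HasDerivAt (fun x => exp (2 * x) * u ^ 2 - 1) (exp (2 * x₀) * (2 * 1) * u ^ 2) x₀ :=
        (((((hasDerivAt_id x₀).const_mul 2).exp).mul_const (u ^ 2)).sub_const 1)
      have := (hd.rpow_const (p := ℓ + 3 / 2) (Or.inr (by linarith))).const_mul ((1 - u) ^ k)
      refine this.congr_deriv ?_
      unfold qI
      rw [if_pos h2, show ℓ + 3 / 2 - 1 = ℓ + 1 / 2 by ring]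
      ring
    · have : (fun x => pI k ℓ x u) =ᶠ[nhds x₀] fun x => 0 := by
        filter_upwards [h1] with x hx
        unfold pI
        rw [if_neg hx]
      refine HasDerivAt.congr_of_eventuallyEq ?_ this
      have hq : qI k ℓ x₀ u = 0 := if_neg h2
      rw [hq, mul_zero]
      exact hasDerivAt_const _ _

lemma rho_nonneg (k ℓ L0 : ℝ) (y : ℝ → ℝ) (r : ℝ) (hL : 0 < L0) (hr : 0 < r) :
    0 ≤ rho k ℓ L0 y r := by
  rw [rho_eq k ℓ L0 y r hL hr]
  have h1 := cConst_nonneg ℓ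
  have h2 : 0 ≤ ∫ u, qI k ℓ (charFn L0 y r) u := integral_nonneg fun u => qI_nonneg _ _ _ _
  positivity

lemma pres_nonneg (k ℓ L0 : ℝ) (y : ℝ → ℝ) (r : ℝ) (hl : -(1 / 2) ≤ ℓ) (hL : 0 < L0)
    (hr : 0 < r) : 0 ≤ pres k ℓ L0 y r := by
  rw [pres_eq k ℓ L0 y r hL hr]
  have h1 := cConst_nonneg ℓ
  have h2 : 0 ≤ ∫ u, pI k ℓ (charFn L0 y r) u := integral_nonneg fun u => pI_nonneg _ _ _ _
  have h3 : 0 < 2 * ℓ + 3 := by linarith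
  positivity

lemma rho_zero (k ℓ L0 : ℝ) (y : ℝ → ℝ) (r : ℝ) (hL : 0 < L0) (hr : 0 < r)
    (hx : charFn L0 y r ≤ 0) : rho k ℓ L0 y r = 0 := by
  rw [rho_eq k ℓ L0 y r hL hr]
  simp [qI_zero _ _ _ _ hx]

lemma pres_zero (k ℓ L0 : ℝ) (y : ℝ → ℝ) (r : ℝ) (hL : 0 < L0) (hr : 0 < r)
    (hx : charFn L0 y r ≤ 0) : pres k ℓ L0 y r = 0 := by
  rw [pres_eq k ℓ L0 y r hL hr]
  simp [pI_zero _ _ _ _ hx]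

lemma mass_nonneg (k ℓ L0 : ℝ) (y : ℝ → ℝ) (r : ℝ) (hL : 0 < L0) :
    0 ≤ hawkingMass k ℓ L0 y r := by
  unfold hawkingMass
  have : 0 ≤ ∫ s in Ioc (0 : ℝ) r, s ^ 2 * rho k ℓ L0 y s :=
    setIntegral_nonneg measurableSet_Ioc
      (fun s hs => mul_nonneg (sq_nonneg _) (rho_nonneg k ℓ L0 y s hL hs.1))
  positivity

lemma charFn_deriv (L0 : ℝ) (y : ℝ → ℝ) (r y' : ℝ) (hL : 0 < L0) (hr : 0 < r)
    (hy : HasDerivAt y y' r) : HasDerivAt (charFn L0 y) (y' + 1 / r) r := by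
  have h1 : HasDerivAt (fun r => y r - (1 / 2) * Real.log L0 + Real.log r) (y' + 1 / r) r := by
    have := (hy.sub_const ((1 / 2) * Real.log L0)).add (Real.hasDerivAt_log hr.ne')
    rw [one_div r]
    exact this
  refine h1.congr_of_eventuallyEq ?_
  filter_upwards [lt_mem_nhds hr] with x hx
  unfold charFn
  rw [Real.log_div hL.ne' (by positivity), Real.log_pow]
  push_cast; ring

lemma pres_deriv (k ℓ L0 : ℝ) (y : ℝ → ℝ) (r y' : ℝ) (hk : 0 ≤ k) (hl : -(1 / 2) ≤ ℓ)
    (hL : 0 < L0) (hr : 0 < r) (hy : HasDerivAt y y' r) :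
    HasDerivAt (fun r => r ^ 4 * pres k ℓ L0 y r)
      (r ^ 4 * (rho k ℓ L0 y r + pres k ℓ L0 y r) * (y' + 1 / r)) r := by
  have hg := charFn_deriv L0 y r y' hL hr hy
  have hP := (P_hasDerivAt k ℓ hk hl (charFn L0 y r)).comp r hg
  have h1 := (hg.exp.mul hP).const_mul (cConst ℓ / (2 * ℓ + 3) * L0 ^ (ℓ + 2))
  refine (h1.congr_of_eventuallyEq ?_).congr_deriv ?_
  · filter_upwards [lt_mem_nhds hr] with x hx
    rw [pres_eq k ℓ L0 y x hL hx]
    simp only [Pi.mul_apply, Function.comp]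
    field_simp
  · rw [pres_eq k ℓ L0 y r hL hr, rho_eq k ℓ L0 y r hL hr]
    have h3 : 2 * ℓ + 3 ≠ 0 := by linarith
    have h4 : exp (2 * charFn L0 y r) = exp (charFn L0 y r) ^ 2 := by
      rw [← Real.exp_nat_mul]; norm_num
    simp only [Function.comp, h4]
    field_simp
    ring

lemma y_antitone (k ℓ L0 : ℝ) (y : ℝ → ℝ) (hl : -(1 / 2) ≤ ℓ) (hL : 0 < L0)
    (hy : QuasiShell k ℓ L0 y) (r : ℝ) (hr : 0 ≤ r) : y r ≤ y 0 := by
  have : AntitoneOn y (Ici 0) := by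
    refine antitoneOn_of_deriv_nonpos (convex_Ici 0) hy.1.continuousOn ?_ ?_
    · intro x hx
      rw [interior_Ici] at hx
      exact (hy.2 x hx).2.differentiableAt.differentiableWithinAt
    · intro x hx
      rw [interior_Ici] at hx
      have hx : 0 < x := hx
      rw [(hy.2 x hx).2.deriv]
      have h1 := (hy.2 x hx).1
      have h2 := pres_nonneg k ℓ L0 y x hl hL hx
      have h3 := mass_nonneg k ℓ L0 y x hL
      have h4 : 0 < 1 - 2 * hawkingMass k ℓ L0 y x / x := by linarith
      have h5 : 0 ≤ (1 - 2 * hawkingMass k ℓ L0 y x / x)⁻¹ *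
        (4 * π * x * pres k ℓ L0 y x + hawkingMass k ℓ L0 y x / x ^ 2) := by positivity
      linarith
  exact this self_mem_Ici hr hr

lemma charFn_nonpos (k ℓ L0 : ℝ) (y : ℝ → ℝ) (hl : -(1 / 2) ≤ ℓ) (hL : 0 < L0)
    (hy : QuasiShell k ℓ L0 y) (r : ℝ) (hr : 0 < r) (hR : r ≤ innerRadius L0 y) :
    charFn L0 y r ≤ 0 := by
  have h1 := y_antitone k ℓ L0 y hl hL hy r hr.le
  have hb : 0 < sqrt L0 := sqrt_pos.mpr hL
  have h2 : exp (y r) ≤ sqrt L0 / r := by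
    rw [le_div_iff₀ hr]
    unfold innerRadius at hR
    calc exp (y r) * r ≤ exp (y 0) * (sqrt L0 * exp (-(y 0))) :=
          mul_le_mul (exp_le_exp.mpr h1) hR hr.le (exp_pos _).le
      _ = sqrt L0 := by rw [Real.exp_neg]; field_simp
  rw [exp_charFn L0 y r hL hr] at h2
  have h3 : 0 < sqrt L0 / r := by positivity
  rw [← Real.exp_le_one_iff]
  by_contra hc
  push Not at hc
  nlinarith

lemma innerRadius_pos (L0 : ℝ) (y : ℝ → ℝ) (hL : 0 < L0) : 0 < innerRadius L0 y := by
  unfold innerRadius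
  have hb : 0 < sqrt L0 := sqrt_pos.mpr hL
  positivity

lemma mass_zero (k ℓ L0 : ℝ) (y : ℝ → ℝ) (hl : -(1 / 2) ≤ ℓ) (hL : 0 < L0)
    (hy : QuasiShell k ℓ L0 y) : hawkingMass k ℓ L0 y (innerRadius L0 y) = 0 := by
  unfold hawkingMass
  rw [setIntegral_eq_zero_of_forall_eq_zero, mul_zero]
  intro s hs
  rw [rho_zero k ℓ L0 y s hL hs.1 (charFn_nonpos k ℓ L0 y hl hL hy s hs.1 hs.2), mul_zero]

lemma mass_deriv (k ℓ L0 : ℝ) (y : ℝ → ℝ) (hk : 0 ≤ k) (hl : -(1 / 2) ≤ ℓ) (hL : 0 < L0)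
    (hy : QuasiShell k ℓ L0 y) (r : ℝ) (hr : innerRadius L0 y ≤ r) :
    HasDerivAt (hawkingMass k ℓ L0 y) (4 * π * (r ^ 2 * rho k ℓ L0 y r)) r := by
  have hR := innerRadius_pos L0 y hL
  have hr0 : 0 < r := hR.trans_le hr
  have hc : ContinuousOn (fun s => s ^ 2 * rho k ℓ L0 y s) (Ioi 0) := by
    have h1 : ContinuousOn (fun s => s ^ 2 * (cConst ℓ * L0 ^ (ℓ + 2) * (s ^ 4)⁻¹ *
      (exp (charFn L0 y s) ^ 3 * ∫ u, qI k ℓ (charFn L0 y s) u))) (Ioi 0) := by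
      have hg : ContinuousOn (charFn L0 y) (Ioi 0) := fun x hx =>
        (charFn_deriv L0 y x _ hL hx (hy.2 x hx).2).continuousAt.continuousWithinAt
      have hq := (Q_continuous k ℓ hk hl).comp_continuousOn hg
      have hi : ContinuousOn (fun s : ℝ => (s ^ 4)⁻¹) (Ioi 0) :=
        ContinuousOn.inv₀ (by fun_prop) (fun x hx => by have : 0 < x := hx; positivity)
      have he : ContinuousOn (fun s => exp (charFn L0 y s)) (Ioi 0) := hg.rexp
      exact ContinuousOn.mul (by fun_prop)
        ((continuousOn_const.mul hi).mul ((he.pow 3).mul hq))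
    refine h1.congr fun s hs => ?_
    simp only
    rw [rho_eq k ℓ L0 y s hL hs]
  have hi1 : IntervalIntegrable (fun s => s ^ 2 * rho k ℓ L0 y s) volume 0 (innerRadius L0 y) := by
    have h0 : IntervalIntegrable (fun _ => (0:ℝ)) volume 0 (innerRadius L0 y) := by simp
    refine h0.congr ?_
    intro s hs
    rw [uIoc_of_le hR.le] at hs
    simp only
    rw [rho_zero k ℓ L0 y s hL hs.1 (charFn_nonpos k ℓ L0 y hl hL hy s hs.1 hs.2), mul_zero]
  have hi2 : IntervalIntegrable (fun s => s ^ 2 * rho k ℓ L0 y s) volume (innerRadius L0 y) r := by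
    refine (hc.mono ?_).intervalIntegrable
    rw [uIcc_of_le hr]
    intro s hs
    exact hR.trans_le hs.1
  have hd := (intervalIntegral.integral_hasDerivAt_right (hi1.trans hi2)
    (hc.stronglyMeasurableAtFilter isOpen_Ioi r hr0)
    (hc.continuousAt (Ioi_mem_nhds hr0))).const_mul (4 * π)
  refine hd.congr_of_eventuallyEq ?_
  filter_upwards [lt_mem_nhds hr0] with x hx
  unfold hawkingMass
  rw [intervalIntegral.integral_of_le hx.le]

/-- The almost conserved quantity. -/
noncomputable def Phi (M w : ℝ → ℝ) (r : ℝ) : ℝ :=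
  w r / sqrt (1 - 2 * M r) + 3 / 2 * sqrt (1 - 2 * M r) + 1 / 2 * (sqrt (1 - 2 * M r))⁻¹

lemma Phi_deriv (M w : ℝ → ℝ) (r R : ℝ) (hr : 0 < r) (h : 0 < 1 - 2 * M r)
    (hM : HasDerivAt M ((R - M r) / r) r)
    (hw : HasDerivAt w ((-2 * w r + (R + w r) * (1 - (w r + M r) / (1 - 2 * M r))) / r) r) :
    HasDerivAt (Phi M w)
      ((-(w r / sqrt (1 - 2 * M r)) - w r * (w r + M r) / sqrt (1 - 2 * M r) ^ 3
        - M r * w r / sqrt (1 - 2 * M r) ^ 3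
        + M r * (3 * sqrt (1 - 2 * M r) ^ 2 - 1) / (2 * sqrt (1 - 2 * M r) ^ 3)) / r) r := by
  have hs := ((hM.const_mul 2).const_sub 1).sqrt h.ne'
  have hsp : 0 < sqrt (1 - 2 * M r) := sqrt_pos.mpr h
  have h1 := ((hw.div hs hsp.ne').add (hs.const_mul (3 / 2))).add ((hs.inv hsp.ne').const_mul (1 / 2))
  refine (h1.congr_of_eventuallyEq (Eventually.of_forall fun x => by
    simp [Phi])).congr_deriv ?_
  have hsq : sqrt (1 - 2 * M r) ^ 2 = 1 - 2 * M r := sq_sqrt h.le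
  rw [← hsq, sqrt_sq hsp.le]
  generalize sqrt (1 - 2 * M r) = s at *
  have hMM : M r = (1 - s ^ 2) / 2 := by linarith
  rw [hMM]
  field_simp
  ring

lemma Phi_bound (M w R : ℝ → ℝ) (R0 r2 : ℝ) (hR0 : 0 < R0) (hr2 : R0 ≤ r2)
    (hthin : 1000 * ((r2 - R0) / R0) ≤ 1 / 100)
    (hM0 : ∀ r, R0 ≤ r → r ≤ r2 → 0 ≤ M r) (hM1 : ∀ r, R0 ≤ r → r ≤ r2 → M r ≤ 4 / 9)
    (hw0 : ∀ r, R0 ≤ r → r ≤ r2 → 0 ≤ w r)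
    (hMR : M R0 = 0) (hwR : w R0 = 0)
    (hM : ∀ r, R0 ≤ r → r ≤ r2 → HasDerivAt M ((R r - M r) / r) r)
    (hw : ∀ r, R0 ≤ r → r ≤ r2 →
      HasDerivAt w ((-2 * w r + (R r + w r) * (1 - (w r + M r) / (1 - 2 * M r))) / r) r) :
    2 - 1 / 100 ≤ Phi M w r2 := by
  have hPhi0 : Phi M w R0 = 2 := by
    unfold Phi; rw [hMR, hwR]; norm_num
  have hs : ∀ r, R0 ≤ r → r ≤ r2 → 1 / 3 ≤ sqrt (1 - 2 * M r) ∧ sqrt (1 - 2 * M r) ≤ 1 := by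
    intro r h1 h2
    constructor
    · apply le_sqrt_of_sq_le
      linarith [hM1 r h1 h2]
    · rw [sqrt_le_one]
      linarith [hM0 r h1 h2]
  have hd : ∀ r, R0 ≤ r → r ≤ r2 → HasDerivAt (Phi M w) _ r := fun r h1 h2 =>
    Phi_deriv M w r (R r) (hR0.trans_le h1) (by linarith [hM1 r h1 h2]) (hM r h1 h2) (hw r h1 h2)
  -- upper bound
  have hup : ∀ r, R0 ≤ r → r ≤ r2 → Phi M w r ≤ 3 := by
    intro r h1 h2
    have hthin' : 12 / R0 * (r - R0) ≤ 1 := by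
      have : (r - R0) / R0 ≤ (r2 - R0) / R0 := by gcongr
      have h3 : 12 / R0 * (r - R0) = 12 * ((r - R0) / R0) := by ring
      have h4 : 0 ≤ (r - R0) / R0 := div_nonneg (by linarith) hR0.le
      linarith
    have := Convex.image_sub_le_mul_sub_of_deriv_le (convex_Icc R0 r2) (f := Phi M w)
      (fun x hx => (hd x hx.1 hx.2).continuousAt.continuousWithinAt)
      (by
        rw [interior_Icc]
        exact fun x hx => (hd x hx.1.le hx.2.le).differentiableAt.differentiableWithinAt)
      (C := 12 / R0)
      (by
        rw [interior_Icc]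
        intro x hx
        rw [(hd x hx.1.le hx.2.le).deriv]
        obtain ⟨s1, s2⟩ := hs x hx.1.le hx.2.le
        have m0 := hM0 x hx.1.le hx.2.le
        have m1 := hM1 x hx.1.le hx.2.le
        have w0 := hw0 x hx.1.le hx.2.le
        generalize sqrt (1 - 2 * M x) = s at *
        have hs0 : 0 < s := by linarith
        have e1 : 0 ≤ w x / s := by positivity
        have e2 : 0 ≤ w x * (w x + M x) / s ^ 3 := by positivity
        have e3 : 0 ≤ M x * w x / s ^ 3 := by positivity
        have s3 : 1 / 27 ≤ s ^ 3 := by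
          calc (1:ℝ) / 27 = (1 / 3) ^ 3 := by norm_num
            _ ≤ s ^ 3 := by gcongr
        have e4 : M x * (3 * s ^ 2 - 1) / (2 * s ^ 3) ≤ 12 := by
          rw [div_le_iff₀ (by positivity)]
          nlinarith
        have hx0 : 0 < x := hR0.trans hx.1
        apply div_le_div₀ (by norm_num) (by linarith) hR0 hx.1.le)
      R0 ⟨le_rfl, hr2⟩ r ⟨h1, h2⟩ h1
    linarith
  have hwb : ∀ r, R0 ≤ r → r ≤ r2 → w r ≤ 3 := by
    intro r h1 h2
    have h3 := hup r h1 h2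
    obtain ⟨s1, s2⟩ := hs r h1 h2
    have w0 := hw0 r h1 h2
    unfold Phi at h3
    generalize sqrt (1 - 2 * M r) = s at *
    have hs0 : 0 < s := by linarith
    have e1 : w r ≤ w r / s := by
      rw [le_div_iff₀ hs0]; nlinarith
    have e2 : 0 < s⁻¹ := by positivity
    linarith
  have := Convex.mul_sub_le_image_sub_of_le_deriv (convex_Icc R0 r2) (f := Phi M w)
      (fun x hx => (hd x hx.1 hx.2).continuousAt.continuousWithinAt)
      (by
        rw [interior_Icc]
        exact fun x hx => (hd x hx.1.le hx.2.le).differentiableAt.differentiableWithinAt)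
      (C := -(1000 / R0))
      (by
        rw [interior_Icc]
        intro x hx
        rw [(hd x hx.1.le hx.2.le).deriv]
        obtain ⟨s1, s2⟩ := hs x hx.1.le hx.2.le
        have m0 := hM0 x hx.1.le hx.2.le
        have m1 := hM1 x hx.1.le hx.2.le
        have w0 := hw0 x hx.1.le hx.2.le
        have w1 := hwb x hx.1.le hx.2.le
        generalize sqrt (1 - 2 * M x) = s at *
        have hs0 : 0 < s := by linarith
        have s3 : 1 / 27 ≤ s ^ 3 := by
          calc (1:ℝ) / 27 = (1 / 3) ^ 3 := by norm_num
            _ ≤ s ^ 3 := by gcongr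
        have e1 : w x / s ≤ 9 := by
          rw [div_le_iff₀ hs0]; nlinarith
        have e2 : w x * (w x + M x) / s ^ 3 ≤ 12 * 27 := by
          rw [div_le_iff₀ (by positivity)]; nlinarith
        have e3 : M x * w x / s ^ 3 ≤ 3 * 27 := by
          rw [div_le_iff₀ (by positivity)]; nlinarith
        have e4 : -27 ≤ M x * (3 * s ^ 2 - 1) / (2 * s ^ 3) := by
          rw [le_div_iff₀ (by positivity)]
          nlinarith [mul_nonneg m0 (sq_nonneg s)]
        have hx0 : 0 < x := hR0.trans hx.1
        rw [← neg_div, div_le_div_iff₀ hR0 hx0]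
        nlinarith [hx.1])
      R0 ⟨le_rfl, hr2⟩ r2 ⟨hr2, le_rfl⟩ hr2
  have h3 : -(1000 / R0) * (r2 - R0) = -(1000 * ((r2 - R0) / R0)) := by ring
  linarith

lemma final_algebra (M w : ℝ → ℝ) (r : ℝ) (hM1 : M r ≤ 4 / 9) (hw1 : w r ≤ 1 / 100)
    (hPhi : 2 - 1 / 100 ≤ Phi M w r) (hneg : 1 ≤ (w r + M r) / (1 - 2 * M r)) :
    2 / 5 ≤ M r := by
  have h0 : 0 < 1 - 2 * M r := by linarith
  rw [le_div_iff₀ h0] at hneg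
  by_contra hc
  push Not at hc
  have hsq : sqrt (1 - 2 * M r) ^ 2 = 1 - 2 * M r := sq_sqrt h0.le
  have hsp : 0 < sqrt (1 - 2 * M r) := sqrt_pos.mpr h0
  unfold Phi at hPhi
  generalize sqrt (1 - 2 * M r) = s at *
  have e : w r / s + 3 / 2 * s + 1 / 2 * s⁻¹ = (2 * w r + 3 * s ^ 2 + 1) / (2 * s) := by
    field_simp
  rw [e, le_div_iff₀ (by positivity)] at hPhi
  have s1 : 0.44 < s := by nlinarith
  have s2 : s < 0.6 := by nlinarith
  nlinarith [mul_pos (sub_pos.2 s1) (sub_pos.2 s2)]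

lemma exists_small (c κ d a b e : ℝ) (ha : 0 < a) (hb : 0 < b) (he : 0 < e) :
    ∃ ε : ℝ, 0 < ε ∧ ∀ R, 0 < R → R ≤ ε →
      c * R ^ a + κ * R ^ b ≤ 1 / 100000 ∧ d * R ^ e ≤ 1 / 100 := by
  have h0 : ∀ x : ℝ, 0 < x → Tendsto (fun R : ℝ => R ^ x) (nhds 0) (nhds 0) := by
    intro x hx
    have := (Real.continuousAt_rpow_const 0 x (Or.inr hx.le)).tendsto
    rwa [zero_rpow hx.ne'] at this
  have h1 : Tendsto (fun R : ℝ => c * R ^ a + κ * R ^ b) (nhds 0) (nhds 0) := by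
    simpa using ((h0 a ha).const_mul c).add ((h0 b hb).const_mul κ)
  have h2 : Tendsto (fun R : ℝ => d * R ^ e) (nhds 0) (nhds 0) := by
    simpa using (h0 e he).const_mul d
  have h3 := (h1.eventually (gt_mem_nhds (show (0:ℝ) < 1 / 100000 by norm_num))).and
    (h2.eventually (gt_mem_nhds (show (0:ℝ) < 1 / 100 by norm_num)))
  obtain ⟨δ, hδ, h⟩ := Metric.eventually_nhds_iff.1 h3
  refine ⟨δ / 2, by linarith, fun R hR hR' => ?_⟩
  have := h (y := R) (by rw [Real.dist_eq, sub_zero, abs_of_pos hR]; linarith)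
  exact ⟨this.1.le, this.2.le⟩

/-- At the second crossing radius `r₂` one has `m(r₂)/r₂ ≥ 2/5`,
provided the inner radius is small enough. Here `C_l, C_u` are the constants of
the two-sided matter bounds on `[R₀, 2R₀]`. -/
theorem mass_ratio_at_r2 (k ℓ L0 Cl Cu : ℝ)
    (hk : 0 ≤ k) (hl : -(1 / 2) ≤ ℓ) (hL : 0 < L0) (hCl : 0 < Cl) (hCu : 0 < Cu) :
    ∃ ε : ℝ, 0 < ε ∧
      ∀ y : ℝ → ℝ, QuasiShell k ℓ L0 y →
        (∀ r > (0 : ℝ), 2 * hawkingMass k ℓ L0 y r / r ≤ 8 / 9) →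
        (∀ r, innerRadius L0 y ≤ r → r ≤ 2 * innerRadius L0 y →
          0 ≤ charFn L0 y r →
          Cl * charFn L0 y r ^ qExp k ℓ / r ^ 4 ≤ rho k ℓ L0 y r ∧
          rho k ℓ L0 y r ≤ Cu * charFn L0 y r ^ qExp k ℓ / r ^ 4 ∧
          Cl * charFn L0 y r ^ (qExp k ℓ + 1) / r ^ 4 ≤ pres k ℓ L0 y r ∧
          pres k ℓ L0 y r ≤ Cu * charFn L0 y r ^ (qExp k ℓ + 1) / r ^ 4) →
        innerRadius L0 y ≤ ε →
        ∀ r2 : ℝ,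
          innerRadius L0 y + sigmaStar k ℓ Cu (innerRadius L0 y) < r2 →
          r2 ≤ innerRadius L0 y + sigmaStar k ℓ Cu (innerRadius L0 y) +
              kappaC k ℓ Cl Cu * innerRadius L0 y ^ ((qExp k ℓ + 2) / (qExp k ℓ + 1)) →
          charFn L0 y r2 = gammaStar k ℓ Cu (innerRadius L0 y) →
          (∀ r, innerRadius L0 y + sigmaStar k ℓ Cu (innerRadius L0 y) ≤ r → r ≤ r2 →
            gammaStar k ℓ Cu (innerRadius L0 y) ≤ charFn L0 y r) →
          2 / 5 ≤ hawkingMass k ℓ L0 y r2 / r2 := by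
  have hq : 1 ≤ qExp k ℓ := by unfold qExp; linarith
  obtain ⟨ε, hε, hsmall⟩ := exists_small (C0c k ℓ Cu) (kappaC k ℓ Cl Cu) (4 * π * Cu)
    ((2 * qExp k ℓ + 1) / (qExp k ℓ * (qExp k ℓ + 1))) (1 / (qExp k ℓ + 1)) (1 / qExp k ℓ)
    (by positivity) (by positivity) (by positivity)
  refine ⟨ε, hε, ?_⟩
  intro y hy hB hmat hRε r2 hr2a hr2b hγ2 hγge
  have hR0 := innerRadius_pos L0 y hL
  have hmR := mass_zero k ℓ L0 y hl hL hy
  have hpR := pres_zero k ℓ L0 y _ hL hR0 (charFn_nonpos k ℓ L0 y hl hL hy _ hR0 le_rfl)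
  have hmd := mass_deriv k ℓ L0 y hk hl hL hy
  obtain ⟨hs1, hs2⟩ := hsmall _ hR0 hRε
  generalize innerRadius L0 y = R0 at *
  generalize hqd : qExp k ℓ = q at *
  have hC0 : 0 < C0c k ℓ Cu := by
    unfold C0c Cmax
    have : 0 < max 1 (max Cu (4 * π * Cu)) := lt_max_of_lt_left one_pos
    have h8 : (0:ℝ) < 8 ^ (1 / (qExp k ℓ + 1)) := rpow_pos_of_pos (by norm_num) _
    exact lt_min (by norm_num) (by positivity)
  have hC1 : C0c k ℓ Cu ≤ 1 / 4 := min_le_left _ _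
  have hσ : sigmaStar k ℓ Cu R0
      = R0 * (C0c k ℓ Cu * R0 ^ ((2 * q + 1) / (q * (q + 1)))) := by
    unfold sigmaStar
    rw [hqd, rpow_add hR0, rpow_one]; ring
  have hb : R0 ^ ((q + 2) / (q + 1)) = R0 * R0 ^ (1 / (q + 1)) := by
    rw [← rpow_one_add' hR0.le (by positivity)]
    congr 1; field_simp; ring
  rw [hb] at hr2b
  have hRa : 0 < R0 ^ ((2 * q + 1) / (q * (q + 1))) := rpow_pos_of_pos hR0 _
  have hσ0 : 0 < sigmaStar k ℓ Cu R0 := by rw [hσ]; positivity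
  have hR2 : R0 ≤ r2 := by linarith
  have hr20 : 0 < r2 := by linarith
  have hthin0 : (r2 - R0) / R0 ≤ 1 / 100000 := by
    rw [div_le_iff₀ hR0]
    rw [hσ] at hr2b
    nlinarith
  have hr2le : r2 ≤ 2 * R0 := by
    rw [div_le_iff₀ hR0] at hthin0
    linarith
  have hγ0 : 0 < gammaStar k ℓ Cu R0 := by unfold gammaStar; positivity
  have hγ1 : gammaStar k ℓ Cu R0 ≤ R0 ^ ((2 * q + 1) / (q * (q + 1))) := by
    unfold gammaStar
    rw [div_le_iff₀ (by positivity)]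
    have h1 : sigmaStar k ℓ Cu R0 ≤ R0 * R0 ^ ((2 * q + 1) / (q * (q + 1))) := by
      rw [hσ]
      apply mul_le_mul_of_nonneg_left _ hR0.le
      nlinarith
    nlinarith
  have hγq : gammaStar k ℓ Cu R0 ^ (q + 1) ≤ R0 ^ 2 * R0 ^ (1 / q) := by
    calc gammaStar k ℓ Cu R0 ^ (q + 1)
        ≤ (R0 ^ ((2 * q + 1) / (q * (q + 1)))) ^ (q + 1) :=
          rpow_le_rpow hγ0.le hγ1 (by linarith)
      _ = R0 ^ 2 * R0 ^ (1 / q) := by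
          rw [← rpow_mul hR0.le, ← rpow_natCast, ← rpow_add hR0]
          congr 1
          push_cast
          field_simp
  set m := hawkingMass k ℓ L0 y with hm
  set p := pres k ℓ L0 y with hp
  set ρ := rho k ℓ L0 y with hρ
  have hw2 : 4 * π * (r2 ^ 4 * p r2) / r2 ^ 2 ≤ 1 / 100 := by
    have h1 := (hmat r2 hR2 hr2le (by rw [hγ2]; exact hγ0.le)).2.2.2
    rw [hγ2, le_div_iff₀ (by positivity)] at h1
    have h2 : R0 ^ 2 ≤ r2 ^ 2 := by gcongr
    rw [div_le_iff₀ (by positivity)]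
    have h3 : r2 ^ 4 * p r2 ≤ Cu * (R0 ^ 2 * R0 ^ (1 / q)) := by
      calc r2 ^ 4 * p r2 = p r2 * r2 ^ 4 := by ring
        _ ≤ _ := h1
        _ ≤ _ := mul_le_mul_of_nonneg_left hγq hCu.le
    calc 4 * π * (r2 ^ 4 * p r2) ≤ 4 * π * (Cu * (R0 ^ 2 * R0 ^ (1 / q))) :=
          mul_le_mul_of_nonneg_left h3 (by positivity)
      _ = (4 * π * Cu * R0 ^ (1 / q)) * R0 ^ 2 := by ring
      _ ≤ 1 / 100 * R0 ^ 2 := mul_le_mul_of_nonneg_right hs2 (by positivity)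
      _ ≤ 1 / 100 * r2 ^ 2 := by linarith
  have hM1 : ∀ r, R0 ≤ r → r ≤ r2 → m r / r ≤ 4 / 9 := by
    intro r h1 _
    have := hB r (hR0.trans_le h1)
    rw [mul_div_assoc] at this
    linarith
  have hPhi := Phi_bound (fun r => m r / r) (fun r => 4 * π * (r ^ 4 * p r) / r ^ 2)
    (fun r => 4 * π * r ^ 2 * ρ r) R0 r2 hR0 hR2 (by linarith)
    (fun r h1 _ => div_nonneg (mass_nonneg k ℓ L0 y r hL) (hR0.trans_le h1).le)
    hM1
    (fun r h1 _ => by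
      have := pres_nonneg k ℓ L0 y r hl hL (hR0.trans_le h1)
      have hr := hR0.trans_le h1
      positivity)
    (by simp [hmR]) (by simp [hpR])
    (fun r h1 _ => by
      have hr := hR0.trans_le h1
      refine ((hmd r h1).div (hasDerivAt_id r) hr.ne').congr_deriv ?_
      simp only [id]
      field_simp)
    (fun r h1 h2 => by
      have hr := hR0.trans_le h1
      have hden : 0 < 1 - 2 * (m r / r) := by linarith [hM1 r h1 h2]
      have h3 := pres_deriv k ℓ L0 y r _ hk hl hL hr (hy.2 r hr).2
      refine ((h3.const_mul (4 * π)).div (hasDerivAt_pow 2 r) (by positivity)).congr_deriv ?_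
      rw [← hm, ← hp, ← hρ, mul_div_assoc 2 (m r) r]
      generalize hM : m r / r = M at *
      have hmM : m r = M * r := by rw [← hM]; field_simp
      rw [hmM]
      field_simp
      ring)
  have hneg : -(1 - 2 * m r2 / r2)⁻¹ * (4 * π * r2 * p r2 + m r2 / r2 ^ 2) + 1 / r2 ≤ 0 := by
    have h1 := charFn_deriv L0 y r2 _ hL hr20 (hy.2 r2 hr20).2
    have h2 := (hasDerivAt_iff_tendsto_slope.1 h1).mono_left
      (nhdsWithin_mono r2 (show Iio r2 ⊆ {r2}ᶜ from fun x hx => ne_of_lt hx))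
    refine le_of_tendsto h2 ?_
    filter_upwards [Ioo_mem_nhdsLT hr2a] with x hx
    rw [slope_def_field]
    refine div_nonpos_of_nonneg_of_nonpos ?_ (by linarith [hx.2])
    rw [hγ2]
    linarith [hγge x hx.1.le hx.2.le]
  refine final_algebra (fun r => m r / r) (fun r => 4 * π * (r ^ 4 * p r) / r ^ 2) r2
    (hM1 r2 hR2 le_rfl) hw2 hPhi ?_
  have hden : 0 < 1 - 2 * (m r2 / r2) := by linarith [hM1 r2 hR2 le_rfl]
  have e : (4 * π * (r2 ^ 4 * p r2) / r2 ^ 2 + m r2 / r2) / (1 - 2 * (m r2 / r2))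
      = r2 * ((1 - 2 * m r2 / r2)⁻¹ * (4 * π * r2 * p r2 + m r2 / r2 ^ 2)) := by
    rw [mul_div_assoc 2 (m r2) r2]
    field_simp
  rw [e]
  have h4 : r2 * (1 / r2) = 1 := by field_simp
  nlinarith
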